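/- The two-setting two-outcome qubit assemblage defined by σ_{1|1} = 0.3 • |0⟩⟨0|, σ_{2|1} = 0.2 • |0⟩⟨0| + 0.5 • |1⟩⟨1|, σ_{1|2} = 0.3 • |+⟩⟨+|, σ_{2|2} = 0.2 • |+⟩⟨+| + 0.5 • |−⟩⟨−| is steerable, i.e. it is not unsteerable. Here |0⟩, |1⟩ is the standard basis of ℂ² and |±⟩ = (|0⟩ ± |1⟩)/√2. -/

import Mathlib

open scoped BigOperators Matrix ComplexOrder Kronecker ComplexConjugate

/-- A POVM on `ℂ^d` with outcome set `B`: positive semidefinite effects summing to `1`. -/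
def IsPOVM {d : ℕ} {B : Type} [Fintype B] (E : B → Matrix (Fin d) (Fin d) ℂ) : Prop :=
  (∀ b, (E b).PosSemidef) ∧ ∑ b, E b = 1

/-- A family of POVMs `E b y` (outcome `b`, setting `y`) on `ℂ^d` is jointly measurable
if it arises from a single POVM `G` by classical post-processing. -/
def JointlyMeasurable {d : ℕ} {B Y : Type} [Fintype B] [Fintype Y]
    (E : B → Y → Matrix (Fin d) (Fin d) ℂ) : Prop :=
  ∃ (n : ℕ) (G : Fin n → Matrix (Fin d) (Fin d) ℂ) (p : B → Y → Fin n → ℝ),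
    IsPOVM G ∧ (∀ b y l, 0 ≤ p b y l) ∧ (∀ y l, ∑ b, p b y l = 1) ∧
    (∀ b y, E b y = ∑ l, p b y l • G l)

/-- An assemblage `σ b y` on `ℂ^d` is unsteerable if it admits a local-hidden-state model. -/
def Unsteerable {d : ℕ} {B Y : Type} [Fintype B] [Fintype Y]
    (σ : B → Y → Matrix (Fin d) (Fin d) ℂ) : Prop :=
  ∃ (n : ℕ) (τ : Fin n → Matrix (Fin d) (Fin d) ℂ) (p : B → Y → Fin n → ℝ),
    (∀ l, (τ l).PosSemidef) ∧ (∑ l, (τ l).trace = 1) ∧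
    (∀ b y l, 0 ≤ p b y l) ∧ (∀ y l, ∑ b, p b y l = 1) ∧
    (∀ b y, σ b y = ∑ l, p b y l • τ l)

/-- `|0⟩`. -/
noncomputable def ket0 : Fin 2 → ℂ := ![1, 0]
/-- `|1⟩`. -/
noncomputable def ket1 : Fin 2 → ℂ := ![0, 1]
/-- `|+⟩ = (|0⟩ + |1⟩)/√2`. -/
noncomputable def ketP : Fin 2 → ℂ := ![(Real.sqrt 2 : ℂ)⁻¹, (Real.sqrt 2 : ℂ)⁻¹]
/-- `|−⟩ = (|0⟩ − |1⟩)/√2`. -/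
noncomputable def ketM : Fin 2 → ℂ := ![(Real.sqrt 2 : ℂ)⁻¹, -(Real.sqrt 2 : ℂ)⁻¹]

/-- `|ψ⟩⟨ψ|`. -/
noncomputable def proj (ψ : Fin 2 → ℂ) : Matrix (Fin 2) (Fin 2) ℂ :=
  Matrix.vecMulVec ψ (star ψ)

/-- The explicit two-setting two-outcome qubit assemblage
`σ_{1|1} = 0.3|0⟩⟨0|`, `σ_{2|1} = 0.2|0⟩⟨0| + 0.5|1⟩⟨1|`,
`σ_{1|2} = 0.3|+⟩⟨+|`, `σ_{2|2} = 0.2|+⟩⟨+| + 0.5|−⟩⟨−|`,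
with outcome `b : Fin 2` (0 ↦ 1, 1 ↦ 2) and setting `y : Fin 2` (0 ↦ 1, 1 ↦ 2). -/
noncomputable def exampleAssemblage : Fin 2 → Fin 2 → Matrix (Fin 2) (Fin 2) ℂ :=
  fun b y =>
    if y = 0 then
      if b = 0 then (0.3 : ℝ) • proj ket0
      else (0.2 : ℝ) • proj ket0 + (0.5 : ℝ) • proj ket1
    else
      if b = 0 then (0.3 : ℝ) • proj ketP
      else (0.2 : ℝ) • proj ketP + (0.5 : ℝ) • proj ketM

/-- The quadratic form of a positive semidefinite matrix on real vectors. -/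
lemma real_form_nonneg {M : Matrix (Fin 2) (Fin 2) ℂ} (hM : M.PosSemidef) (x y : ℝ) :
    0 ≤ (M 0 0).re * x ^ 2 + ((M 0 1).re + (M 1 0).re) * (x * y) + (M 1 1).re * y ^ 2 := by
  have h := hM.re_dotProduct_nonneg (![(x : ℂ), (y : ℂ)])
  simp [dotProduct, Matrix.mulVec, Fin.sum_univ_two] at h
  nlinarith [h]

lemma form_zero {a c d : ℝ} (h : ∀ x y : ℝ, 0 ≤ a * x ^ 2 + c * (x * y) + d * y ^ 2)
    (hd : d = 0) (he : a - c + d = 0) : a = 0 ∧ c = 0 := by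
  subst hd
  have h1 := h 1 (-2)
  have h2 := h 1 0
  constructor <;> linarith

/-- the explicit assemblage is steerable (not unsteerable). -/
theorem exampleAssemblage_steerable : ¬ Unsteerable exampleAssemblage := by
  rintro ⟨n, τ, p, hτ, -, hp, hs, hσ⟩
  have hent : ∀ b y i j, (exampleAssemblage b y i j).re = ∑ l, p b y l * (τ l i j).re := by
    intro b y i j
    rw [hσ b y]
    simp [Matrix.sum_apply]
  have hr : (√2)⁻¹ * (√2)⁻¹ = (1 / 2 : ℝ) := by
    rw [← mul_inv, Real.mul_self_sqrt (by norm_num)]; norm_num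
  have hrc : ((√2 : ℝ) : ℂ)⁻¹ * ((√2 : ℝ) : ℂ)⁻¹ = (((1 / 2 : ℝ)) : ℂ) := by
    rw [← hr]; push_cast; rfl
  have hf : ∀ l, ∀ x y : ℝ, 0 ≤ (τ l 0 0).re * x ^ 2 + ((τ l 0 1).re + (τ l 1 0).re) * (x * y)
      + (τ l 1 1).re * y ^ 2 := fun l => real_form_nonneg (hτ l)
  -- entries of the first outcomes
  have hP : ∀ i j, (exampleAssemblage 0 1 i j).re = 0.15 := by
    intro i j
    have : proj ketP i j = (((1 / 2 : ℝ)) : ℂ) := by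
      rw [← hrc]
      fin_cases i <;> fin_cases j <;> simp [proj, ketP, Matrix.vecMulVec_apply]
    simp only [exampleAssemblage, one_ne_zero, if_false, if_true, Matrix.smul_apply, this]
    rw [Complex.smul_re, Complex.ofReal_re]
    norm_num
  have e0 : proj ket0 = !![1, 0; 0, 0] := by
    ext i j
    fin_cases i <;> fin_cases j <;> simp [proj, ket0, Matrix.vecMulVec_apply]
  have e1 : proj ket1 = !![0, 0; 0, 1] := by
    ext i j
    fin_cases i <;> fin_cases j <;> simp [proj, ket1, Matrix.vecMulVec_apply]
  have hZ : ∀ i j, (exampleAssemblage 0 0 i j).re = if i = 0 ∧ j = 0 then 0.3 else 0 := by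
    intro i j
    fin_cases i <;> fin_cases j <;>
      simp [exampleAssemblage, e0]
  have hT0 : (exampleAssemblage 0 0 + exampleAssemblage 1 0) =
      ((0.5 : ℝ)) • (1 : Matrix (Fin 2) (Fin 2) ℂ) := by
    ext i j
    fin_cases i <;> fin_cases j <;>
      simp [exampleAssemblage, e0, e1] <;> norm_num
  have hT : ∀ i j, ∑ l, (τ l i j).re = if i = j then 0.5 else 0 := by
    intro i j
    have h1 : (exampleAssemblage 0 0 i j).re + (exampleAssemblage 1 0 i j).re
        = if i = j then 0.5 else 0 := by
      rw [← Complex.add_re, ← Matrix.add_apply, hT0]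
      fin_cases i <;> fin_cases j <;> simp
    rw [← h1, hent, hent, ← Finset.sum_add_distrib]
    refine Finset.sum_congr rfl fun l _ => ?_
    have := hs 0 l
    rw [Fin.sum_univ_two] at this
    rw [← add_mul, this, one_mul]
  have hple : ∀ y l, p 0 y l ≤ 1 := by
    intro y l
    have := hs y l
    rw [Fin.sum_univ_two] at this
    linarith [hp 1 y l]
  have z0 : ∀ l, p 0 0 l * (τ l 1 1).re = 0 := by
    have h0 : ∑ l, p 0 0 l * (τ l 1 1).re = 0 := by
      rw [← hent, hZ]; simp
    have := (Finset.sum_eq_zero_iff_of_nonneg (fun l _ => mul_nonneg (hp 0 0 l) (by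
      have := hf l 0 1
      linarith))).1 h0
    exact fun l => this l (Finset.mem_univ l)
  have z1 : ∀ l, p 0 1 l * ((τ l 0 0).re - ((τ l 0 1).re + (τ l 1 0).re) + (τ l 1 1).re) = 0 := by
    have h0 : ∑ l, p 0 1 l * ((τ l 0 0).re - ((τ l 0 1).re + (τ l 1 0).re) + (τ l 1 1).re)
        = 0 := by
      simp only [mul_add, mul_sub, Finset.sum_add_distrib, Finset.sum_sub_distrib]
      simp only [← hent, hP]
      norm_num
    have := (Finset.sum_eq_zero_iff_of_nonneg (fun l _ => mul_nonneg (hp 0 1 l) (by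
      have := hf l 1 (-1)
      linarith))).1 h0
    exact fun l => this l (Finset.mem_univ l)
  have key : ∀ l, 0 ≤ (1 - p 0 0 l - p 0 1 l) *
      (4 * (τ l 0 0).re + 2 * (τ l 0 1).re + 2 * (τ l 1 0).re + (τ l 1 1).re) := by
    intro l
    have hq := hf l 2 1
    rcases mul_eq_zero.1 (z0 l) with h | h
    · exact mul_nonneg (by linarith [hple 1 l]) (by linarith)
    rcases mul_eq_zero.1 (z1 l) with h' | h'
    · exact mul_nonneg (by linarith [hple 0 l]) (by linarith)
    obtain ⟨ha, hc⟩ := form_zero (hf l) h h'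
    have : 4 * (τ l 0 0).re + 2 * (τ l 0 1).re + 2 * (τ l 1 0).re + (τ l 1 1).re = 0 := by
      linarith
    rw [this, mul_zero]
  have hsum := Finset.sum_nonneg (fun l (_ : l ∈ Finset.univ) => key l)
  have hexp : ∑ l, (1 - p 0 0 l - p 0 1 l) *
      (4 * (τ l 0 0).re + 2 * (τ l 0 1).re + 2 * (τ l 1 0).re + (τ l 1 1).re) = -0.05 := by
    have : ∀ l, (1 - p 0 0 l - p 0 1 l) *
      (4 * (τ l 0 0).re + 2 * (τ l 0 1).re + 2 * (τ l 1 0).re + (τ l 1 1).re) =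
      (4 * (τ l 0 0).re + 2 * (τ l 0 1).re + 2 * (τ l 1 0).re + (τ l 1 1).re)
      - (4 * (p 0 0 l * (τ l 0 0).re) + 2 * (p 0 0 l * (τ l 0 1).re)
        + 2 * (p 0 0 l * (τ l 1 0).re) + p 0 0 l * (τ l 1 1).re)
      - (4 * (p 0 1 l * (τ l 0 0).re) + 2 * (p 0 1 l * (τ l 0 1).re)
        + 2 * (p 0 1 l * (τ l 1 0).re) + p 0 1 l * (τ l 1 1).re) := fun l => by ring
    simp only [this, Finset.sum_add_distrib, Finset.sum_sub_distrib, ← Finset.mul_sum]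
    simp only [← hent, hP, hZ, hT]
    norm_num
  rw [hexp] at hsum
  norm_num at hsum
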